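/- Let α > 0. Then the supremum over all integers m ≥ 1 of S_α(m) equals max(2/α, ζ(1+α)); that is, S_α(m) ≤ max(2/α, ζ(1+α)) for every integer m ≥ 1, and sup_{m≥1} S_α(m) = max(2/α, ζ(1+α)). -/

import Mathlib

/-- `S α m = m^{-α} ∑_{n=1}^m n^{α-1} + m^{α} ∑_{n=m+1}^∞ n^{-α-1}`, where the tail sum
over `n > m` is written as `∑_{k≥0} (m+1+k)^{-α-1}`. -/
noncomputable def S (α : ℝ) (m : ℕ+) : ℝ :=
  (m : ℝ) ^ (-α) * ∑ n ∈ Finset.Icc 1 (m : ℕ), (n : ℝ) ^ (α - 1) +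
    (m : ℝ) ^ α * ∑' k : ℕ, ((m : ℝ) + 1 + (k : ℝ)) ^ (-α - 1)

/-!
Write `T m = ∑_{n > m} n ^ (-α - 1)`. Then `S α (m + 1)` is a convex combination of `S α m` and
`((m + 1) ^ α + m ^ α) * T m`, so any bound on the latter quantity that is uniform in `m` yields
`S α m ≤ max bound (S α 1)` by induction, where `S α 1 = ζ(1 + α)`. Telescoping `T m` against
`1 / (n ^ α + (n - 1) ^ α)` gives the bound `1 / c` as soon as `c * t ≤ logisticGap α t` for all
`t = 1 / n ≤ 1 / 2`. The gap vanishes at `α = 0` and is concave and increasing in `α`, so a few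
explicit exponents suffice: `α = 7 / 4` gives `c = α / 2`, that is the bound `2 / α`, for all
`α ≤ 7 / 4`, and for larger `α` the exponents `2` and `3` give bounds below `ζ(1 + α)`.
Conversely, comparison with integrals gives `liminf S α m ≥ 2 / α`.
-/

open Set Filter Topology

lemma tsum_le_of_le_sub_succ {f g : ℕ → ℝ} (hf : ∀ k, 0 ≤ f k) (hg : ∀ k, 0 ≤ g k)
    (hfg : ∀ k, f k ≤ g k - g (k + 1)) : ∑' k, f k ≤ g 0 := by
  refine Real.tsum_le_of_sum_range_le hf fun n ↦ ?_
  calc ∑ i ∈ Finset.range n, f i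
      ≤ ∑ i ∈ Finset.range n, (g i - g (i + 1)) := Finset.sum_le_sum fun i _ ↦ hfg i
    _ = g 0 - g n := Finset.sum_range_sub' g n
    _ ≤ g 0 := sub_le_self _ (hg n)

lemma concaveOn_sigmoid_Ici : ConcaveOn ℝ (Ici 0) Real.sigmoid := by
  refine AntitoneOn.concaveOn_of_deriv (convex_Ici 0) continuous_sigmoid.continuousOn
    differentiable_sigmoid.differentiableOn ?_
  rw [interior_Ici, Real.deriv_sigmoid]
  intro x hx y _ hxy
  have half_le : 1 / 2 ≤ Real.sigmoid x := by
    simpa using Real.sigmoid_le (mem_Ioi.1 hx).le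
  have le_sigmoid : Real.sigmoid x ≤ Real.sigmoid y := Real.sigmoid_le hxy
  nlinarith

lemma concaveOn_sigmoid_mul {c : ℝ} (hc : 0 ≤ c) :
    ConcaveOn ℝ (Ici 0) fun α ↦ Real.sigmoid (α * c) := by
  have hcomp := concaveOn_sigmoid_Ici.comp_linearMap (LinearMap.mulRight ℝ c)
  exact hcomp.subset (fun α hα ↦ mul_nonneg hα hc) (convex_Ici 0)

/-- `logisticGap α t = 1 / (1 + (1 - t) ^ α) - 1 / (1 + (1 + t) ^ α)`. For `t = 1 / n` it is
`n ^ α` times the drop of `1 / (x ^ α + (x - 1) ^ α)` from `x = n` to `x = n + 1`, and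
as a function of `α` it is a sum of two sigmoids, up to a constant. -/
noncomputable def logisticGap (α t : ℝ) : ℝ :=
  (1 + (1 - t) ^ α)⁻¹ - (1 + (1 + t) ^ α)⁻¹

section logisticGap

variable {α β t : ℝ}

lemma inv_one_add_rpow_eq_sigmoid {x : ℝ} (hx : 0 < x) (α : ℝ) :
    (1 + x ^ α)⁻¹ = Real.sigmoid (α * -Real.log x) := by
  rw [Real.sigmoid_def, Real.rpow_def_of_pos hx]
  ring_nf

lemma logisticGap_eq_sigmoid_add_sigmoid (ht₀ : -1 < t) (ht₁ : t < 1) (α : ℝ) :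
    logisticGap α t =
      Real.sigmoid (α * -Real.log (1 - t)) + Real.sigmoid (α * Real.log (1 + t)) - 1 := by
  rw [logisticGap, inv_one_add_rpow_eq_sigmoid (by linarith),
    inv_one_add_rpow_eq_sigmoid (by linarith), mul_neg _ (Real.log (1 + t)), Real.sigmoid_neg]
  ring

lemma monotone_logisticGap (ht₀ : 0 ≤ t) (ht₁ : t < 1) : Monotone (logisticGap · t) := by
  intro α β hαβ
  simp only [logisticGap_eq_sigmoid_add_sigmoid (show -1 < t by linarith) ht₁]
  have log_sub_nonneg : 0 ≤ -Real.log (1 - t) :=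
    neg_nonneg.2 (Real.log_nonpos (by linarith) (by linarith))
  have log_add_nonneg : 0 ≤ Real.log (1 + t) := Real.log_nonneg (by linarith)
  gcongr

lemma concaveOn_logisticGap (ht₀ : 0 ≤ t) (ht₁ : t < 1) :
    ConcaveOn ℝ (Ici 0) (logisticGap · t) := by
  have log_sub_nonneg : 0 ≤ -Real.log (1 - t) :=
    neg_nonneg.2 (Real.log_nonpos (by linarith) (by linarith))
  have log_add_nonneg : 0 ≤ Real.log (1 + t) := Real.log_nonneg (by linarith)
  simp only [logisticGap_eq_sigmoid_add_sigmoid (show -1 < t by linarith) ht₁]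
  exact ((concaveOn_sigmoid_mul log_sub_nonneg).add
    (concaveOn_sigmoid_mul log_add_nonneg)).add_const (-1)

lemma div_mul_logisticGap_le (ht₀ : 0 ≤ t) (ht₁ : t < 1) (hα : 0 ≤ α) (hβ : 0 < β)
    (hαβ : α ≤ β) : α / β * logisticGap β t ≤ logisticGap α t := by
  have hconc := (concaveOn_logisticGap ht₀ ht₁).2 (mem_Ici.2 le_rfl) (mem_Ici.2 hβ.le)
    (sub_nonneg.2 ((div_le_one hβ).2 hαβ)) (by positivity) (sub_add_cancel 1 (α / β))
  have gap_zero : logisticGap 0 t = 0 := by simp [logisticGap]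
  simpa [gap_zero, div_mul_cancel₀ α hβ.ne'] using hconc

lemma sub_le_logisticGap_two (ht₀ : 0 ≤ t) : t - t ^ 5 / 4 ≤ logisticGap 2 t := by
  have gap_eq : logisticGap 2 t = 4 * t / (4 + t ^ 4) := by
    rw [logisticGap, Real.rpow_two, Real.rpow_two]
    field_simp
    ring
  rw [gap_eq, le_div_iff₀ (by positivity)]
  linarith [show 0 ≤ t ^ 9 by positivity]

lemma mul_le_logisticGap_two (ht₀ : 0 ≤ t) (ht₁ : t ≤ 1 / 2) : 63 / 64 * t ≤ logisticGap 2 t := by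
  have pow_le : t ^ 4 ≤ (1 / 2) ^ 4 := by gcongr
  linarith [sub_le_logisticGap_two ht₀, mul_le_mul_of_nonneg_left pow_le ht₀]

lemma self_le_logisticGap_three (ht₀ : 0 ≤ t) (ht₁ : t ≤ 1 / 2) : t ≤ logisticGap 3 t := by
  have sub_cube_nonneg : 0 ≤ (1 - t) ^ 3 := pow_nonneg (by linarith) 3
  have pow_le : t ^ 2 ≤ (1 / 2) ^ 2 := by gcongr
  have slack : 0 ≤ t * (2 - t ^ 2 - 3 * t ^ 4 + t ^ 6) :=
    mul_nonneg ht₀ (by nlinarith [show 0 ≤ t ^ 6 by positivity])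
  rw [logisticGap, show (3 : ℝ) = (3 : ℕ) by norm_num, Real.rpow_natCast, Real.rpow_natCast,
    inv_sub_inv (by positivity) (by positivity), le_div_iff₀ (by positivity)]
  linarith

lemma rpow_three_halves {x : ℝ} (hx : 0 ≤ x) : x ^ (3 / 2 : ℝ) = √x ^ 3 := by
  rw [Real.sqrt_eq_rpow, ← Real.rpow_natCast, ← Real.rpow_mul hx]
  norm_num

-- With `p = √(1 + t)` and `q = √(1 - t)` this is the bound on `logisticGap (3 / 2) t` divided by
-- `p - q`. It is symmetric, and bounding `p + q` linearly in `w = p * q` makes it univariate.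
lemma add_mul_one_add_cube_mul_one_add_cube_le {p q : ℝ} (hp : 0 ≤ p) (hq : 0 ≤ q)
    (hpq : p ^ 2 + q ^ 2 = 2) (hmul : 4 / 5 ≤ p * q) :
    (p + q) * (13 - (p * q) ^ 2) * ((1 + p ^ 3) * (1 + q ^ 3)) ≤
      32 * (p ^ 2 + p * q + q ^ 2) := by
  obtain ⟨w, hw⟩ : ∃ w, w = p * q := ⟨_, rfl⟩
  have w_le_one : w ≤ 1 := by nlinarith [sq_nonneg (p - q)]
  have add_sq : (p + q) ^ 2 = 2 * (1 + w) := by rw [hw]; linarith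
  have add_le : p + q ≤ (3 + w) / 2 := by nlinarith [sq_nonneg (p + q - 2)]
  have cubes_mul : (1 + p ^ 3) * (1 + q ^ 3) = 1 + w ^ 3 + (p + q) * (2 - w) := by
    rw [hw, ← hpq]; ring
  have poly_le : (13 - w ^ 2) * ((3 + w) * (1 + w ^ 3) + 4 * (1 + w) * (2 - w)) ≤
      64 * (2 + w) := by
    rw [← hw] at hmul
    nlinarith [mul_nonneg (sub_nonneg.2 hmul) (sub_nonneg.2 w_le_one),
      pow_nonneg (sub_nonneg.2 w_le_one) 3, pow_nonneg (sub_nonneg.2 w_le_one) 4]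
  have w_nonneg : 0 ≤ w := hw ▸ mul_nonneg hp hq
  have coeff_nonneg : 0 ≤ 13 - w ^ 2 := by nlinarith
  calc (p + q) * (13 - (p * q) ^ 2) * ((1 + p ^ 3) * (1 + q ^ 3))
      = (13 - w ^ 2) * ((p + q) * (1 + w ^ 3) + (p + q) ^ 2 * (2 - w)) := by
        rw [cubes_mul, ← hw]; ring
    _ ≤ (13 - w ^ 2) * ((3 + w) / 2 * (1 + w ^ 3) + 2 * (1 + w) * (2 - w)) := by
        rw [add_sq]; gcongr
    _ ≤ 32 * (2 + w) := by linarith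
    _ = 32 * (p ^ 2 + p * q + q ^ 2) := by rw [← hpq, hw]; ring

lemma add_le_logisticGap_three_halves (ht₀ : 0 ≤ t) (ht₁ : t ≤ 1 / 2) :
    3 / 4 * t + t ^ 3 / 16 ≤ logisticGap (3 / 2) t := by
  rw [logisticGap, rpow_three_halves (by linarith), rpow_three_halves (by linarith)]
  have p_sq : √(1 + t) ^ 2 = 1 + t := Real.sq_sqrt (by linarith)
  have q_sq : √(1 - t) ^ 2 = 1 - t := Real.sq_sqrt (by linarith)
  have q_le_p : √(1 - t) ≤ √(1 + t) := Real.sqrt_le_sqrt (by linarith)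
  have p_nonneg : 0 ≤ √(1 + t) := Real.sqrt_nonneg _
  have q_nonneg : 0 ≤ √(1 - t) := Real.sqrt_nonneg _
  generalize √(1 + t) = p at *
  generalize √(1 - t) = q at *
  have mul_sq : (p * q) ^ 2 = 1 - t ^ 2 := by rw [mul_pow, p_sq, q_sq]; ring
  have le_mul : 4 / 5 ≤ p * q := by
    refine le_of_sq_le_sq ?_ (by positivity)
    nlinarith
  have core := add_mul_one_add_cube_mul_one_add_cube_le p_nonneg q_nonneg (by linarith) le_mul
  rw [inv_sub_inv (by positivity) (by positivity), le_div_iff₀ (by positivity)]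
  calc (3 / 4 * t + t ^ 3 / 16) * ((1 + q ^ 3) * (1 + p ^ 3))
      = t / 16 * (13 - (p * q) ^ 2) * ((1 + p ^ 3) * (1 + q ^ 3)) := by rw [mul_sq]; ring
    _ = (p - q) / 32 * ((p + q) * (13 - (p * q) ^ 2) * ((1 + p ^ 3) * (1 + q ^ 3))) := by
        rw [show t = (p - q) * (p + q) / 2 by linarith]; ring
    _ ≤ (p - q) / 32 * (32 * (p ^ 2 + p * q + q ^ 2)) :=
        mul_le_mul_of_nonneg_left core (by linarith)
    _ = 1 + p ^ 3 - (1 + q ^ 3) := by ring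

-- `t * α / 2 ≤ logisticGap α t` fails at `α = 2`, but only to fifth order in `t`, which the
-- cubic surplus at `α = 3 / 2` absorbs.
lemma mul_le_logisticGap_seven_fourths (ht₀ : 0 ≤ t) (ht₁ : t ≤ 1 / 2) :
    7 / 8 * t ≤ logisticGap (7 / 4) t := by
  have midpoint_le : 1 / 2 * logisticGap (3 / 2) t + 1 / 2 * logisticGap 2 t ≤
      logisticGap (1 / 2 * (3 / 2) + 1 / 2 * 2) t :=
    (concaveOn_logisticGap ht₀ (by linarith)).2 (x := 3 / 2) (y := 2) (by norm_num) (by norm_num)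
      (by norm_num) (by norm_num) (by norm_num)
  rw [show (1 / 2 * (3 / 2) + 1 / 2 * 2 : ℝ) = 7 / 4 by norm_num] at midpoint_le
  have pow_le : t ^ 2 ≤ (1 / 2) ^ 2 := by gcongr
  linarith [add_le_logisticGap_three_halves ht₀ ht₁, sub_le_logisticGap_two ht₀,
    mul_le_mul_of_nonneg_left pow_le (show 0 ≤ t ^ 3 by positivity)]

end logisticGap

/-- The sum `∑_{n ≤ m} n ^ (α - 1)` in the first term of `S α m`. -/
noncomputable def headSum (α : ℝ) (m : ℕ) : ℝ := ∑ n ∈ Finset.Icc 1 m, (n : ℝ) ^ (α - 1)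

/-- The tail `∑_{n > m} n ^ (-α - 1)` in the second term of `S α m`, indexed as in `S`;
`tailSum α 0` is `ζ(1 + α)`. -/
noncomputable def tailSum (α : ℝ) (m : ℕ) : ℝ := ∑' k : ℕ, ((m : ℝ) + 1 + k) ^ (-α - 1)

lemma S_eq_headSum_add_tailSum (α : ℝ) (m : ℕ+) :
    S α m = (m : ℝ) ^ (-α) * headSum α m + (m : ℝ) ^ α * tailSum α m := rfl

lemma headSum_succ (α : ℝ) (m : ℕ) :
    headSum α (m + 1) = headSum α m + ((m : ℝ) + 1) ^ (α - 1) := by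
  simp [headSum, Finset.sum_Icc_succ_top]

section

variable {α : ℝ}

lemma summable_add_rpow (hα : 0 < α) (m : ℕ) :
    Summable fun k : ℕ ↦ ((m : ℝ) + 1 + k) ^ (-α - 1) := by
  have hsum := (summable_nat_add_iff (m + 1)).2
    (Real.summable_nat_rpow.2 (by linarith : -α - 1 < -1))
  refine hsum.congr fun k ↦ ?_
  push_cast
  ring_nf

lemma tailSum_eq_add_tailSum_succ (hα : 0 < α) (m : ℕ) :
    tailSum α m = ((m : ℝ) + 1) ^ (-α - 1) + tailSum α (m + 1) := by
  rw [tailSum, (summable_add_rpow hα m).tsum_eq_zero_add, tailSum]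
  push_cast
  simp only [add_zero, add_assoc, add_comm (1 : ℝ)]

lemma tailSum_zero_eq_tsum_pnat (α : ℝ) : tailSum α 0 = ∑' n : ℕ+, (n : ℝ) ^ (-(1 + α)) := by
  rw [tsum_pnat_eq_tsum_succ (f := fun n : ℕ ↦ (n : ℝ) ^ (-(1 + α))), tailSum]
  refine tsum_congr fun k ↦ ?_
  push_cast
  ring_nf

lemma S_one_eq_tailSum_zero (hα : 0 < α) : S α 1 = tailSum α 0 := by
  rw [tailSum_eq_add_tailSum_succ hα, S_eq_headSum_add_tailSum]
  simp [headSum]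

lemma sum_range_rpow_le_S_one {β : ℝ} (hα : 0 < α) (hαβ : α ≤ β) (N : ℕ) :
    ∑ k ∈ Finset.range N, ((k : ℝ) + 1) ^ (-β - 1) ≤ S α 1 := by
  calc ∑ k ∈ Finset.range N, ((k : ℝ) + 1) ^ (-β - 1)
      ≤ ∑ k ∈ Finset.range N, (((0 : ℕ) : ℝ) + 1 + k) ^ (-α - 1) := by
        refine Finset.sum_le_sum fun k _ ↦ ?_
        rw [Nat.cast_zero, zero_add, add_comm]
        exact Real.rpow_le_rpow_of_exponent_le (by simp) (by linarith)
    _ ≤ tailSum α 0 :=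
        (summable_add_rpow hα 0).sum_le_tsum _ fun k _ ↦ by positivity
    _ = S α 1 := (S_one_eq_tailSum_zero hα).symm

lemma mul_rpow_le_inv_sub_inv {c x : ℝ} (hx : 1 < x) (hc : c * (1 / x) ≤ logisticGap α (1 / x)) :
    c * x ^ (-α - 1) ≤ (x ^ α + (x - 1) ^ α)⁻¹ - ((x + 1) ^ α + x ^ α)⁻¹ := by
  have x_pos : 0 < x := by linarith
  have pred_rpow : (1 - 1 / x) ^ α = (x - 1) ^ α / x ^ α := by
    rw [one_sub_div x_pos.ne', Real.div_rpow (by linarith) x_pos.le]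
  have succ_rpow : (1 + 1 / x) ^ α = (x + 1) ^ α / x ^ α := by
    rw [one_add_div x_pos.ne', Real.div_rpow (by linarith) x_pos.le]
  have pred_pos : 0 < (x - 1) ^ α := Real.rpow_pos_of_pos (by linarith) _
  calc c * x ^ (-α - 1) = (x ^ α)⁻¹ * (c * (1 / x)) := by
        rw [Real.rpow_sub_one x_pos.ne', Real.rpow_neg x_pos.le]; ring
    _ ≤ (x ^ α)⁻¹ * logisticGap α (1 / x) := by gcongr
    _ = (x ^ α + (x - 1) ^ α)⁻¹ - ((x + 1) ^ α + x ^ α)⁻¹ := by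
        rw [logisticGap, pred_rpow, succ_rpow]; field_simp; ring

lemma rpow_add_rpow_mul_tailSum_le {c : ℝ} (hc₀ : 0 < c)
    (hc : ∀ t ∈ Icc 0 (1 / 2), c * t ≤ logisticGap α t) {m : ℕ} (hm : 1 ≤ m) :
    (((m : ℝ) + 1) ^ α + (m : ℝ) ^ α) * tailSum α m ≤ c⁻¹ := by
  have one_le_m : (1 : ℝ) ≤ m := mod_cast hm
  have htele : c * tailSum α m ≤ (((m : ℝ) + 1) ^ α + (m : ℝ) ^ α)⁻¹ := by
    have hsum := tsum_le_of_le_sub_succ (f := fun k : ℕ ↦ c * ((m : ℝ) + 1 + k) ^ (-α - 1))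
      (g := fun k : ℕ ↦ (((m : ℝ) + 1 + k) ^ α + ((m : ℝ) + k) ^ α)⁻¹)
      (fun k ↦ by positivity) (fun k ↦ by positivity) fun k ↦ by
        have two_le : (2 : ℝ) ≤ m + 1 + k := by linarith [k.cast_nonneg (α := ℝ)]
        have hstep := mul_rpow_le_inv_sub_inv (x := m + 1 + k) (by linarith)
          (hc _ ⟨by positivity, one_div_le_one_div_of_le two_pos two_le⟩)
        convert hstep using 5 <;> push_cast <;> ring
    simpa [tailSum, tsum_mul_left] using hsum
  rw [← one_div, le_div_iff₀ (by positivity)] at htele ⊢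
  linarith

lemma S_succ (hα : 0 < α) (m : ℕ+) :
    S α (m + 1) = ((m : ℝ) / (m + 1)) ^ α * S α m + (1 - ((m : ℝ) / (m + 1)) ^ α) *
      ((((m : ℝ) + 1) ^ α + (m : ℝ) ^ α) * tailSum α m) := by
  have m_pos : (0 : ℝ) < m := mod_cast m.pos
  have succ_pos : (0 : ℝ) < m + 1 := by linarith
  simp only [S_eq_headSum_add_tailSum, PNat.add_coe, PNat.one_coe, Nat.cast_add, Nat.cast_one]
  rw [tailSum_eq_add_tailSum_succ hα m, headSum_succ, Real.div_rpow m_pos.le succ_pos.le,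
    Real.rpow_neg m_pos.le, Real.rpow_neg succ_pos.le, Real.rpow_sub_one succ_pos.ne',
    Real.rpow_sub_one succ_pos.ne', Real.rpow_neg succ_pos.le]
  field_simp
  ring

lemma S_le_max_of_mul_le_logisticGap {c : ℝ} (hα : 0 < α) (hc₀ : 0 < c)
    (hc : ∀ t ∈ Icc 0 (1 / 2), c * t ≤ logisticGap α t) (m : ℕ+) :
    S α m ≤ max c⁻¹ (S α 1) := by
  induction m with
  | one => exact le_max_right _ _
  | succ m ih =>
    have weight_le_one : ((m : ℝ) / (m + 1)) ^ α ≤ 1 :=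
      Real.rpow_le_one (by positivity) ((div_le_one (by positivity)).2 (by linarith)) hα.le
    rw [S_succ hα]
    exact convex_Iic (max c⁻¹ (S α 1)) ih
      ((rpow_add_rpow_mul_tailSum_le hc₀ hc m.pos).trans (le_max_left _ _))
      (by positivity) (sub_nonneg.2 weight_le_one) (add_sub_cancel _ _)

lemma S_le_max_of_le_seven_fourths (hα : 0 < α) (hα_le : α ≤ 7 / 4) (m : ℕ+) :
    S α m ≤ max (2 / α) (S α 1) := by
  rw [← inv_div]
  refine S_le_max_of_mul_le_logisticGap hα (by positivity) (fun t ⟨ht₀, ht₁⟩ ↦ ?_) m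
  calc α / 2 * t = α / (7 / 4) * (7 / 8 * t) := by ring
    _ ≤ α / (7 / 4) * logisticGap (7 / 4) t := by
        gcongr; exact mul_le_logisticGap_seven_fourths ht₀ ht₁
    _ ≤ logisticGap α t := div_mul_logisticGap_le ht₀ (by linarith) hα.le (by norm_num) hα_le

lemma exists_inv_le_S_one_of_seven_fourths_le (hα : 7 / 4 ≤ α) :
    ∃ c > 0, c⁻¹ ≤ S α 1 ∧ ∀ t ∈ Icc (0 : ℝ) (1 / 2), c * t ≤ logisticGap α t := by
  have α_pos : 0 < α := by linarith
  rcases le_total α 2 with hα_two | hα_two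
  · refine ⟨63 / 128 * α, by positivity, ?_, fun t ⟨ht₀, ht₁⟩ ↦ ?_⟩
    · calc (63 / 128 * α)⁻¹ ≤ (63 / 128 * (7 / 4))⁻¹ := by gcongr
        _ ≤ ∑ k ∈ Finset.range 3, ((k : ℝ) + 1) ^ (-2 - 1 : ℝ) := by
            norm_num [Finset.sum_range_succ]
        _ ≤ S α 1 := sum_range_rpow_le_S_one α_pos hα_two 3
    · calc 63 / 128 * α * t = α / 2 * (63 / 64 * t) := by ring
        _ ≤ α / 2 * logisticGap 2 t := by gcongr; exact mul_le_logisticGap_two ht₀ ht₁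
        _ ≤ logisticGap α t := div_mul_logisticGap_le ht₀ (by linarith) α_pos.le two_pos hα_two
  rcases le_total α 3 with hα_three | hα_three
  · refine ⟨63 / 64, by norm_num, ?_, fun t ⟨ht₀, ht₁⟩ ↦ ?_⟩
    · calc (63 / 64 : ℝ)⁻¹ ≤ ∑ k ∈ Finset.range 2, ((k : ℝ) + 1) ^ (-3 - 1 : ℝ) := by
            norm_num [Finset.sum_range_succ]
        _ ≤ S α 1 := sum_range_rpow_le_S_one α_pos hα_three 2
    · exact (mul_le_logisticGap_two ht₀ ht₁).trans
        (monotone_logisticGap ht₀ (by linarith) hα_two)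
  · refine ⟨1, one_pos, by simpa using sum_range_rpow_le_S_one α_pos le_rfl 1,
      fun t ⟨ht₀, ht₁⟩ ↦ ?_⟩
    rw [one_mul]
    exact (self_le_logisticGap_three ht₀ ht₁).trans
      (monotone_logisticGap ht₀ (by linarith) hα_three)

lemma S_le_S_one_of_seven_fourths_le (hα : 7 / 4 ≤ α) (m : ℕ+) : S α m ≤ S α 1 := by
  obtain ⟨c, c_pos, inv_le, hc⟩ := exists_inv_le_S_one_of_seven_fourths_le hα
  simpa [inv_le] using S_le_max_of_mul_le_logisticGap (by linarith) c_pos hc m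

lemma S_le_max (hα : 0 < α) (m : ℕ+) : S α m ≤ max (2 / α) (S α 1) := by
  rcases le_total α (7 / 4) with hα_le | hα_ge
  · exact S_le_max_of_le_seven_fourths hα hα_le m
  · exact le_max_of_le_right (S_le_S_one_of_seven_fourths_le hα_ge m)

lemma rpow_sub_one_div_le_headSum (hα : 0 < α) {m : ℕ} (hm : 1 ≤ m) :
    ((m : ℝ) ^ α - 1) / α ≤ headSum α m := by
  have integral_eq : ∫ x in ((1 : ℕ) : ℝ)..m, x ^ (α - 1) = ((m : ℝ) ^ α - 1) / α := by
    rw [integral_rpow (Or.inl (by linarith))]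
    simp
  rw [← integral_eq]
  rcases le_total α 1 with hα_le | hα_ge
  · have hanti : AntitoneOn (fun x : ℝ ↦ x ^ (α - 1)) (Icc (1 : ℕ) m) := fun x hx y _ hxy ↦
      Real.rpow_le_rpow_of_nonpos (zero_lt_one.trans_le (by simpa using hx.1)) hxy (by linarith)
    refine (hanti.integral_le_sum_Ico hm).trans ?_
    exact Finset.sum_le_sum_of_subset_of_nonneg Finset.Ico_subset_Icc_self
      fun n _ _ ↦ by positivity
  · have hmono : MonotoneOn (fun x : ℝ ↦ x ^ (α - 1)) (Icc (1 : ℕ) m) := fun x hx y _ hxy ↦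
      Real.rpow_le_rpow (zero_le_one.trans (by simpa using hx.1)) hxy (by linarith)
    refine (hmono.integral_le_sum_Ico hm).trans ?_
    rw [Finset.sum_Ico_add' (fun n : ℕ ↦ (n : ℝ) ^ (α - 1)) 1 m 1]
    exact Finset.sum_le_sum_of_subset_of_nonneg
      (fun n hn ↦ by simp only [Finset.mem_Ico, Finset.mem_Icc] at hn ⊢; omega)
      fun n _ _ ↦ by positivity

lemma rpow_neg_div_le_tailSum (hα : 0 < α) (m : ℕ) : ((m : ℝ) + 1) ^ (-α) / α ≤ tailSum α m := by
  have hanti : AntitoneOn (fun x : ℝ ↦ x ^ (-α - 1)) (Ici ((m + 1 : ℕ) : ℝ)) := fun x hx y _ hxy ↦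
    Real.rpow_le_rpow_of_nonpos (lt_of_lt_of_le (by positivity) (mem_Ici.1 hx)) hxy (by linarith)
  have hint := hanti.integral_le_tsum_comp_add (m + 1)
    (Real.summable_nat_rpow.2 (by linarith)) fun x hx ↦
      Real.rpow_nonneg ((Nat.cast_nonneg _).trans (mem_Ioi.1 hx).le) _
  rw [integral_Ioi_rpow_of_lt (by linarith) (by positivity)] at hint
  convert hint using 1
  · simp [neg_div_neg_eq]
  · simp [tailSum, add_comm, add_left_comm]

lemma one_sub_rpow_neg_div_add_le_S (hα : 0 < α) (m : ℕ+) :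
    (1 - (m : ℝ) ^ (-α)) / α + ((m : ℝ) / (m + 1)) ^ α / α ≤ S α m := by
  have m_pos : (0 : ℝ) < m := mod_cast m.pos
  rw [S_eq_headSum_add_tailSum]
  gcongr
  · calc (1 - (m : ℝ) ^ (-α)) / α = (m : ℝ) ^ (-α) * (((m : ℝ) ^ α - 1) / α) := by
          rw [Real.rpow_neg m_pos.le]; field_simp
      _ ≤ (m : ℝ) ^ (-α) * headSum α m := by gcongr; exact rpow_sub_one_div_le_headSum hα m.pos
  · calc ((m : ℝ) / (m + 1)) ^ α / α = (m : ℝ) ^ α * (((m : ℝ) + 1) ^ (-α) / α) := by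
          rw [Real.div_rpow (by positivity) (by positivity), Real.rpow_neg (by positivity)]
          field_simp
      _ ≤ (m : ℝ) ^ α * tailSum α m := by gcongr; exact rpow_neg_div_le_tailSum hα m

lemma tendsto_one_sub_rpow_neg_div_add (hα : 0 < α) :
    Tendsto (fun m : ℕ ↦ (1 - (m : ℝ) ^ (-α)) / α + ((m : ℝ) / (m + 1)) ^ α / α) atTop
      (𝓝 (2 / α)) := by
  have hhead : Tendsto (fun m : ℕ ↦ (m : ℝ) ^ (-α)) atTop (𝓝 0) :=
    (tendsto_rpow_neg_atTop hα).comp tendsto_natCast_atTop_atTop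
  have htail : Tendsto (fun m : ℕ ↦ ((m : ℝ) / (m + 1)) ^ α) atTop (𝓝 (1 ^ α)) :=
    (tendsto_natCast_div_add_atTop 1).rpow_const (Or.inl one_ne_zero)
  convert ((hhead.const_sub 1).div_const α).add (htail.div_const α) using 2
  rw [Real.one_rpow]
  ring

lemma two_div_le_of_forall_S_le (hα : 0 < α) {b : ℝ} (hb : ∀ m, S α m ≤ b) : 2 / α ≤ b := by
  refine le_of_tendsto (tendsto_one_sub_rpow_neg_div_add hα) ?_
  filter_upwards [eventually_ge_atTop 1] with m hm
  exact (one_sub_rpow_neg_div_add_le_S hα ⟨m, hm⟩).trans (hb _)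

end

/-- For `α > 0`, `sup_{m ≥ 1} S_α(m) = max(2/α, ζ(1+α))`: every `S_α(m)` is at most
`max(2/α, ζ(1+α))`, and the supremum equals it. Here `ζ(1+α) = ∑_{n≥1} n^{-(1+α)}`. -/
theorem sup_S_eq_max (α : ℝ) (hα : 0 < α) :
    (∀ m : ℕ+, S α m ≤ max (2/α) (∑' n : ℕ+, (n : ℝ) ^ (-(1+α)))) ∧
    (⨆ m : ℕ+, S α m) = max (2/α) (∑' n : ℕ+, (n : ℝ) ^ (-(1+α))) := by
  rw [← tailSum_zero_eq_tsum_pnat, ← S_one_eq_tailSum_zero hα]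
  have hS_le : ∀ m, S α m ≤ max (2 / α) (S α 1) := S_le_max hα
  have hbdd : BddAbove (range (S α)) := ⟨_, forall_mem_range.2 hS_le⟩
  exact ⟨hS_le, (ciSup_le hS_le).antisymm
    (max_le (two_div_le_of_forall_S_le hα (le_ciSup hbdd)) (le_ciSup hbdd 1))⟩
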